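/- Main theorem (Theorem 1): for every ε ∈ [0,1] and every liquid democracy game, there exists an ε-Nash equilibrium x with SW(x) ≥ ε · OPT. -/

import Mathlib

/-!
Some pure profile `s` attains the optimal welfare `OPT`. Consider the game in which every agent who
votes in `s` is forced to vote with probability at least `ε` and is free otherwise, and let `x` be a
Nash equilibrium of it; write `M i` for the best response value of `i` against `x`.

* A forced agent gets at least `(1 - ε) * M i`, since she plays a best response with probability
  `1 - ε`; any other agent gets `M i`. So `x` is an `ε`-Nash equilibrium of the original game.
* A voter `i` of `s` gets at least `u i i`, since voting is available to her. Any other agent `i` with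
  guru `j` in `s` may delegate straight to `j`, who votes with probability at least `ε`; so she gets at
  least `ε * u i j`. Summing over the agents gives `SW u x ≥ ε * OPT`.

The equilibrium comes from Nash's map and Brouwer's fixed point theorem (`exists_equilibrium`,
`brouwer_bounded`). Brouwer's theorem is proved analytically, following Milnor and Rogers: there is no
`C¹` retraction of the ball onto the sphere (`no_retraction`), because the volume of the image of the
ball under the interpolation between the identity and the retraction would be a polynomial in the
parameter that is constant near `0` and vanishes at `1`; continuous maps are handled by smooth
approximation.
-/

open Finset

/-- The guru of agent `i` under pure profile `s` (where `s i = some j` means `i`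
delegates to `j`, with `s i = some i` meaning `i` votes herself, and `s i = none`
meaning `i` abstains): follow delegation arcs for `n` steps; the endpoint is the
guru provided it votes itself. -/
def guru {n : ℕ} (s : Fin n → Option (Fin n)) (i : Fin n) : Option (Fin n) :=
  ((fun o => Option.bind o s)^[n] (some i)).bind
    (fun j => if s j = some j then some j else none)

/-- Utility of agent `i` in the pure profile `s`: `u i (g i)` if the guru exists, else `0`. -/
def pureUtil {n : ℕ} (u : Fin n → Fin n → ℝ) (s : Fin n → Option (Fin n)) (i : Fin n) : ℝ :=
  (guru s i).elim 0 (u i)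

/-- A mixed strategy for a single agent: nonnegative, total probability at most one
(the residual probability is abstention). -/
def IsStrat {n : ℕ} (y : Fin n → ℝ) : Prop := (∀ j, 0 ≤ y j) ∧ (∑ j, y j) ≤ 1

/-- A mixed strategy profile. -/
def IsMixed {n : ℕ} (x : Fin n → Fin n → ℝ) : Prop := ∀ i, IsStrat (x i)

/-- Probability that the independent randomization `x` produces the pure profile `s`. -/
def prob {n : ℕ} (x : Fin n → Fin n → ℝ) (s : Fin n → Option (Fin n)) : ℝ :=
  ∏ i, (s i).elim (1 - ∑ j, x i j) (x i)

/-- Expected utility of agent `i` under the mixed profile `x`. -/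
def util {n : ℕ} (u x : Fin n → Fin n → ℝ) (i : Fin n) : ℝ :=
  ∑ s : Fin n → Option (Fin n), prob x s * pureUtil u s i

/-- Expected social welfare of the mixed profile `x`. -/
def SW {n : ℕ} (u x : Fin n → Fin n → ℝ) : ℝ := ∑ i, util u x i

/-- The set of social-welfare values achievable by mixed profiles; `OPT` is its greatest element. -/
def SWvals {n : ℕ} (u : Fin n → Fin n → ℝ) : Set ℝ :=
  {w | ∃ x, IsMixed x ∧ w = SW u x}

/-- `x` is an `ε`-Nash equilibrium. -/
def EpsNash {n : ℕ} (u : Fin n → Fin n → ℝ) (ε : ℝ) (x : Fin n → Fin n → ℝ) : Prop :=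
  ∀ i y, IsStrat y → util u x i ≥ (1 - ε) * util u (Function.update x i y) i

/-- `x` is an (exact, mixed) Nash equilibrium. -/
def NashEq {n : ℕ} (u x : Fin n → Fin n → ℝ) : Prop :=
  ∀ i y, IsStrat y → util u x i ≥ util u (Function.update x i y) i

/-! ### Brouwer's fixed point theorem -/

section Brouwer
variable {E : Type*} [NormedAddCommGroup E] [InnerProductSpace ℝ E]

/-- A Lipschitz map on the closed unit ball vanishing on the sphere stays Lipschitz, with the same
constant, when extended by zero: a segment leaving the ball crosses the sphere. -/
theorem lipschitz_extend_zero {h : E → E} {K : NNReal}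
    (hL : LipschitzOnWith K h (Metric.closedBall 0 1)) (h0 : ∀ x, ‖x‖ = 1 → h x = 0) :
    LipschitzWith K ((Metric.closedBall (0 : E) 1).indicator h) := by
  set H := (Metric.closedBall (0 : E) 1).indicator h
  have key : ∀ x y : E, ‖x‖ ≤ 1 → 1 < ‖y‖ → dist (H x) (H y) ≤ K * dist x y := by
    intro x y hx hy
    have hc : ContinuousOn (fun t : ℝ => ‖AffineMap.lineMap x y t‖) (Set.Icc 0 1) := by
      apply Continuous.continuousOn
      exact continuous_norm.comp AffineMap.lineMap_continuous
    obtain ⟨t, ht, hz⟩ :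
        (1 : ℝ) ∈ (fun t : ℝ => ‖AffineMap.lineMap x y t‖) '' Set.Icc 0 1 :=
      intermediate_value_Icc (zero_le_one' ℝ) hc ⟨by simpa using hx, by simpa using hy.le⟩
    set z := AffineMap.lineMap x y t
    have hzn : ‖z‖ = 1 := hz
    have hHy : H y = h z := by
      rw [h0 z hzn]
      exact Set.indicator_of_notMem (by simpa using hy) _
    have hHx : H x = h x := Set.indicator_of_mem (by simpa using hx) _
    rw [hHx, hHy]
    refine (hL.dist_le_mul x (by simpa using hx) z (by simp [hzn])).trans ?_
    refine mul_le_mul_of_nonneg_left ?_ K.2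
    rw [dist_left_lineMap, Real.norm_of_nonneg ht.1]
    nlinarith [ht.2, dist_nonneg (x := x) (y := y)]
  refine LipschitzWith.of_dist_le_mul fun x y => ?_
  rcases le_or_gt ‖x‖ 1 with hx | hx <;> rcases le_or_gt ‖y‖ 1 with hy | hy
  · have hHx : H x = h x := Set.indicator_of_mem (by simpa using hx) _
    have hHy : H y = h y := Set.indicator_of_mem (by simpa using hy) _
    rw [hHx, hHy]
    exact hL.dist_le_mul x (by simpa using hx) y (by simpa using hy)
  · exact key x y hx hy
  · rw [dist_comm, dist_comm x]; exact key y x hy hx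
  · have hHx : H x = 0 := Set.indicator_of_notMem (by simpa using hx) _
    have hHy : H y = 0 := Set.indicator_of_notMem (by simpa using hy) _
    rw [hHx, hHy, dist_self]; positivity

variable [FiniteDimensional ℝ E]

/-- The polynomial `t ↦ det (1 + t A)` has degree at most `dim E`, so its value at `1` is obtained
from its values on any `s` with more than `dim E` elements by Lagrange interpolation, with weights
independent of `A`. -/
theorem det_one_add_eq_interp (s : Finset ℝ) (hs : Module.finrank ℝ E < #s) :
    ∃ w : ℝ → ℝ, ∑ t ∈ s, w t = 1 ∧
      ∀ A : E →L[ℝ] E, (1 + A).det = ∑ t ∈ s, w t * (1 + t • A).det := by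
  have hne : s.Nonempty := Finset.card_pos.1 (by omega)
  have hinj : Set.InjOn (id : ℝ → ℝ) s := Function.injective_id.injOn
  refine ⟨fun t => (Lagrange.basis s id t).eval 1, ?_, fun A => ?_⟩
  · rw [← Polynomial.eval_finsetSum, Lagrange.sum_basis hinj hne, Polynomial.eval_one]
  · let b := Module.finBasis ℝ E
    let M := LinearMap.toMatrix b b (A : E →ₗ[ℝ] E)
    let P : Polynomial ℝ := Matrix.det
      ((Polynomial.X : Polynomial ℝ) • M.map Polynomial.C + (1 : Matrix _ _ ℝ).map Polynomial.C)
    have hP : ∀ t : ℝ, P.eval t = (1 + t • A).det := by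
      intro t
      have h1 : P.eval t = Matrix.det (t • M + 1) := by
        rw [← Polynomial.coe_evalRingHom, RingHom.map_det]
        congr 1
        ext i j
        by_cases hij : i = j
        · subst hij; simp only [M]; simp; ring
        · simp only [M]; simp [hij]; ring
      rw [h1, ContinuousLinearMap.det, ← LinearMap.det_toMatrix b]
      congr 1
      simp [M, LinearMap.toMatrix_one, add_comm]
    have hdeg : P.degree < #s := by
      refine lt_of_le_of_lt Polynomial.degree_le_natDegree ?_
      have := Polynomial.natDegree_det_X_add_C_le M 1
      rw [Fintype.card_fin] at this
      exact_mod_cast lt_of_le_of_lt this hs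
    have h := congrArg (Polynomial.eval 1) (Lagrange.eq_interpolate hinj hdeg)
    rw [hP, one_smul, Lagrange.interpolate_apply, Polynomial.eval_finsetSum] at h
    rw [h]
    refine Finset.sum_congr rfl fun t _ => ?_
    simp [hP, mul_comm]

/-- `det (1 + t A)` does not vanish for `t ∈ [0, 1]` and equals `1` at `t = 0`. -/
theorem det_one_add_pos (A : E →L[ℝ] E) (hA : ‖A‖ < 1) : 0 < (1 + A).det := by
  have hne : ∀ t ∈ Set.Icc (0 : ℝ) 1, (1 + t • A).det ≠ 0 := by
    intro t ht
    have hu : IsUnit (1 + t • A) := by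
      have : ‖-(t • A)‖ < 1 := by
        rw [norm_neg, norm_smul, Real.norm_of_nonneg ht.1]
        nlinarith [ht.2, norm_nonneg A]
      simpa using isUnit_one_sub_of_norm_lt_one this
    have hu' : IsUnit ((1 + t • A : E →L[ℝ] E) : E →ₗ[ℝ] E) :=
      hu.map (ContinuousLinearMap.toLinearMapRingHom : (E →L[ℝ] E) →+* (E →ₗ[ℝ] E))
    exact (LinearMap.isUnit_det _ hu').ne_zero
  have hc : ContinuousOn (fun t : ℝ => (1 + t • A).det) (Set.Icc 0 1) := by
    have : Continuous (fun t : ℝ => (1 + t • A).det) :=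
      ContinuousLinearMap.continuous_det.comp (by fun_prop)
    exact this.continuousOn
  by_contra hneg
  have h0 : (1 + (0 : ℝ) • A).det = 1 := by simp [ContinuousLinearMap.det]
  obtain ⟨t, ht, h⟩ : (0 : ℝ) ∈ (fun t : ℝ => (1 + t • A).det) '' Set.Icc 0 1 :=
    intermediate_value_Icc' (zero_le_one' ℝ) hc
      ⟨by simpa using hneg, by simp only [h0]; norm_num⟩
  exact hne t ht h

/-- A small perturbation `x ↦ x + t • h x` of the identity with `h = 0` on the sphere maps the open
unit ball onto itself. Surjectivity is Banach's fixed point theorem for `x ↦ y - t • h x`, with `h`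
extended by zero. -/
theorem image_ball_eq {h : E → E} {K : NNReal}
    (hL : LipschitzOnWith K h (Metric.closedBall 0 1)) (h0 : ∀ x, ‖x‖ = 1 → h x = 0)
    (h1 : ∀ x, ‖x‖ < 1 → ‖x + h x‖ ≤ 1)
    {t : ℝ} (ht0 : 0 ≤ t) (ht1 : t < 1) (htK : t * K < 1) :
    (fun x => x + t • h x) '' Metric.ball 0 1 = Metric.ball 0 1 := by
  apply Set.Subset.antisymm
  · rintro _ ⟨x, hx, rfl⟩
    have hx' : ‖x‖ < 1 := by simpa using hx
    have : x + t • h x = (1 - t) • x + t • (x + h x) := by module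
    simp only [mem_ball_zero_iff, this]
    calc ‖(1 - t) • x + t • (x + h x)‖ ≤ (1 - t) * ‖x‖ + t * ‖x + h x‖ := by
          refine (norm_add_le _ _).trans_eq ?_
          rw [norm_smul, norm_smul, Real.norm_of_nonneg ht0, Real.norm_of_nonneg (by linarith)]
      _ < 1 := by nlinarith [h1 x hx']
  · intro y hy
    have hH := lipschitz_extend_zero hL h0
    set H := (Metric.closedBall (0 : E) 1).indicator h
    have hcontr : ContractingWith (Real.toNNReal t * K) (fun x => y - t • H x) := by
      refine ⟨?_, LipschitzWith.of_dist_le_mul fun a b => ?_⟩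
      · rw [← NNReal.coe_lt_coe]; simpa [Real.coe_toNNReal _ ht0] using htK
      · rw [dist_sub_left, dist_smul₀, Real.norm_of_nonneg ht0, NNReal.coe_mul,
          Real.coe_toNNReal _ ht0, mul_assoc]
        exact mul_le_mul_of_nonneg_left (hH.dist_le_mul a b) ht0
    obtain ⟨x, hx⟩ : ∃ x, y - t • H x = x := ⟨_, hcontr.fixedPoint_isFixedPt⟩
    have hy' : ‖y‖ < 1 := by simpa using hy
    have hxy : x + t • H x = y := (sub_eq_iff_eq_add.1 hx).symm
    have hx1 : ‖x‖ < 1 := by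
      by_contra hge
      have hHx : H x = 0 := by
        rcases eq_or_lt_of_le (not_lt.1 hge) with h' | h'
        · have : H x = h x := Set.indicator_of_mem (by simp [← h']) _
          rw [this, h0 x h'.symm]
        · exact Set.indicator_of_notMem (by simpa using h') _
      rw [hHx, smul_zero, add_zero] at hxy
      exact hge (hxy ▸ hy')
    have hHx : H x = h x := Set.indicator_of_mem (by simpa using hx1.le) _
    exact ⟨x, by simpa using hx1, by simpa [hHx] using hxy⟩

open MeasureTheory in
/-- There is no `C¹` retraction `r` of the closed unit ball onto the sphere. With `h = r - id`, the
integral over the ball of `det (1 + t • Dh)` is the volume of the image of `x ↦ x + t • h x`, i.e. the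
volume of the ball, for small `t ≥ 0`. It is polynomial in `t`, hence equal to that volume at `t = 1`
as well; but `1 + Dh = Dr` is singular because `‖r‖` is constant. -/
theorem no_retraction (r : E → E) (hr : ∀ x ∈ Metric.closedBall (0 : E) 1, ContDiffAt ℝ 1 r x)
    (hsph : ∀ x ∈ Metric.closedBall (0 : E) 1, ‖r x‖ = 1) (hid : ∀ x, ‖x‖ = 1 → r x = x) :
    False := by
  borelize E
  let B : Set E := Metric.ball 0 1
  let C : Set E := Metric.closedBall 0 1
  have hBC : B ⊆ C := Metric.ball_subset_closedBall
  have hCc : IsCompact C := isCompact_closedBall 0 1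
  let h : E → E := fun x => r x - x
  have hh : ∀ x ∈ C, ContDiffAt ℝ 1 h x := fun x hx => (hr x hx).sub contDiffAt_id
  have hd : ∀ x ∈ C, HasFDerivAt h (fderiv ℝ h x) x := fun x hx =>
    ((hh x hx).differentiableAt (by simp)).hasFDerivAt
  have hcont : ContinuousOn (fderiv ℝ h) C := fun x hx =>
    ((hh x hx).fderiv_right (m := 0) (by simp)).continuousAt.continuousWithinAt
  obtain ⟨K₀, hK₀⟩ := hCc.exists_bound_of_continuousOn hcont
  let K : NNReal := Real.toNNReal K₀
  have hK : ∀ x ∈ C, ‖fderiv ℝ h x‖ ≤ K := fun x hx =>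
    (hK₀ x hx).trans (Real.le_coe_toNNReal _)
  have hL : LipschitzOnWith K h C :=
    (convex_closedBall (0 : E) 1).lipschitzOnWith_of_nnnorm_fderiv_le
      (fun x hx => (hd x hx).differentiableAt) (fun x hx => by exact_mod_cast hK x hx)
  have h0 : ∀ x, ‖x‖ = 1 → h x = 0 := fun x hx => by simp [h, hid x hx]
  have hdetc : ∀ t : ℝ, ContinuousOn (fun x => (1 + t • fderiv ℝ h x).det) C := fun t =>
    ContinuousLinearMap.continuous_det.comp_continuousOn
      (continuousOn_const.add (hcont.const_smul t))
  have hint : ∀ t : ℝ, IntegrableOn (fun x => (1 + t • fderiv ℝ h x).det) B volume := fun t =>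
    ((hdetc t).integrableOn_compact hCc).mono_set hBC
  have hvol : ∀ t : ℝ, 0 ≤ t → t < 1 → t * K < 1 →
      ∫ x in B, (1 + t • fderiv ℝ h x).det = volume.real B := by
    intro t ht0 ht1 htK
    have hpos : ∀ x ∈ B, 0 < (1 + t • fderiv ℝ h x).det := by
      intro x hx
      apply det_one_add_pos
      rw [norm_smul, Real.norm_of_nonneg ht0]
      exact (mul_le_mul_of_nonneg_left (hK x (hBC hx)) ht0).trans_lt htK
    have hinj : Set.InjOn (fun x => x + t • h x) B := by
      intro x hx y hy hxy
      have h1 : dist (h x) (h y) ≤ K * dist x y := hL.dist_le_mul x (hBC hx) y (hBC hy)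
      have h2 : x - y = t • (h y - h x) := by
        have : x + t • h x = y + t • h y := hxy
        rw [smul_sub, sub_eq_sub_iff_add_eq_add, this]; abel
      have h3 : dist x y = t * dist (h x) (h y) := by
        rw [dist_eq_norm, h2, norm_smul, Real.norm_of_nonneg ht0, dist_comm, dist_eq_norm]
      have h4 : dist x y = 0 := by
        by_contra hne
        have : 0 < dist x y := lt_of_le_of_ne dist_nonneg (Ne.symm hne)
        nlinarith [mul_le_mul_of_nonneg_left h1 ht0]
      exact dist_eq_zero.1 h4
    have himg := image_ball_eq hL h0
      (fun x hx => by simpa [h] using (hsph x (by simpa using hx.le)).le) ht0 ht1 htK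
    have hder : ∀ x ∈ B, HasFDerivWithinAt (fun x => x + t • h x) (1 + t • fderiv ℝ h x) B x :=
      fun x hx => ((hasFDerivAt_id x).add ((hd x (hBC hx)).const_smul t)).hasFDerivWithinAt
    have hcv := integral_image_eq_integral_abs_det_fderiv_smul volume measurableSet_ball hder hinj
      (fun _ => (1 : ℝ))
    rw [himg] at hcv
    simp only [integral_const, smul_eq_mul, mul_one, measureReal_restrict_apply_univ] at hcv
    change volume.real B = _ at hcv
    rw [hcv]
    exact setIntegral_congr_fun measurableSet_ball fun x hx => (abs_of_pos (hpos x hx)).symm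
  -- `r` has constant norm, so the range of `Dr` is orthogonal to `r x ≠ 0`
  have hone : ∀ x ∈ B, (1 + fderiv ℝ h x).det = 0 := by
    intro x hx
    have hrd : HasFDerivAt r (1 + fderiv ℝ h x) x := by
      have := (hasFDerivAt_id (𝕜 := ℝ) x).add (hd x (hBC hx))
      refine this.congr_of_eventuallyEq (Filter.Eventually.of_forall fun y => ?_)
      simp [h]
    by_contra hne
    set A := 1 + fderiv ℝ h x
    have hin : ∀ v, inner ℝ (r x) (A v) = 0 := by
      have h1 : HasFDerivAt (fun y => ‖r y‖ ^ 2) (2 • (innerSL ℝ (r x)).comp A) x := hrd.norm_sq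
      have h2 : HasFDerivAt (fun y => ‖r y‖ ^ 2) (0 : E →L[ℝ] ℝ) x := by
        refine (hasFDerivAt_const (1 : ℝ) x).congr_of_eventuallyEq ?_
        filter_upwards [Metric.isOpen_ball.mem_nhds hx] with y hy
        simp [hsph y (hBC hy)]
      intro v
      have := congrArg (fun L : E →L[ℝ] ℝ => L v) (h1.unique h2)
      simpa using this
    have hsurj : Function.Surjective A := by
      have hu : IsUnit (A : E →ₗ[ℝ] E) :=
        (LinearMap.isUnit_iff_isUnit_det _).2 (isUnit_iff_ne_zero.2 hne)
      exact ((Module.End.isUnit_iff _).1 hu).2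
    obtain ⟨v, hv⟩ := hsurj (r x)
    have := hin v
    rw [hv, real_inner_self_eq_norm_sq, hsph x (hBC hx)] at this
    norm_num at this
  obtain ⟨δ, hδ0, hδ1, hδK⟩ : ∃ δ : ℝ, 0 < δ ∧ δ < 1 ∧ δ * K < 1 := by
    have hK0 : (0 : ℝ) ≤ K := K.2
    refine ⟨1 / (2 + K), by positivity, ?_, ?_⟩
    · rw [div_lt_one (by positivity)]; linarith
    · rw [div_mul_eq_mul_div, div_lt_one (by positivity)]; linarith
  obtain ⟨s, hs, hcard⟩ := (Set.Icc_infinite hδ0).exists_subset_card_eq (Module.finrank ℝ E + 1)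
  obtain ⟨w, hw1, hw⟩ := det_one_add_eq_interp (E := E) s (by omega)
  have hzero : ∫ x in B, (1 + fderiv ℝ h x).det = 0 :=
    setIntegral_eq_zero_of_forall_eq_zero hone
  have hfull : ∫ x in B, (1 + fderiv ℝ h x).det = volume.real B := by
    rw [funext fun x => hw (fderiv ℝ h x)]
    rw [integral_finsetSum _ fun t _ => (hint t).const_mul (w t)]
    simp_rw [integral_const_mul]
    rw [Finset.sum_congr rfl (g := fun t => w t * volume.real B), ← Finset.sum_mul, hw1, one_mul]
    intro t ht
    have ht' := hs ht
    rw [hvol t ht'.1 (ht'.2.trans_lt hδ1)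
      ((mul_le_mul_of_nonneg_right ht'.2 K.2).trans_lt hδK)]
  have hpos : 0 < volume.real B :=
    ENNReal.toReal_pos (Metric.measure_ball_pos volume (0 : E) one_pos).ne' measure_ball_lt_top.ne
  linarith


/-- Without a fixed point, sending `x` to the point where the ray from `f x` through `x` leaves the
ball would be a `C¹` retraction onto the sphere. -/
theorem brouwer_smooth (f : E → E) (hf : ContDiff ℝ 1 f) (hb : ∀ x, ‖f x‖ ≤ 1) :
    ∃ x, f x = x := by
  by_contra! hne
  let d : E → E := fun x => x - f x
  let a : E → ℝ := fun x => ‖d x‖ ^ 2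
  let b : E → ℝ := fun x => inner ℝ x (d x)
  let D : E → ℝ := fun x => b x ^ 2 + a x * (1 - ‖x‖ ^ 2)
  -- `τ x` is the larger root `t` of `‖x + t • d x‖ = 1`, and `D x` is a quarter of the discriminant
  let τ : E → ℝ := fun x => (-b x + √(D x)) / a x
  have hd0 : ∀ x, d x ≠ 0 := fun x => sub_ne_zero.2 (hne x).symm
  have ha : ∀ x, 0 < a x := fun x => by have := norm_pos_iff.2 (hd0 x); positivity
  -- on the sphere, `2 * b x = a x + 1 - ‖f x‖ ^ 2`
  have hb1 : ∀ x, ‖x‖ = 1 → 0 < b x := by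
    intro x hx
    have h1 : a x = ‖x‖ ^ 2 - 2 * inner ℝ x (f x) + ‖f x‖ ^ 2 := norm_sub_sq_real x (f x)
    have h2 : b x = ‖x‖ ^ 2 - inner ℝ x (f x) := by
      simp only [b, d, inner_sub_right, real_inner_self_eq_norm_sq]
    have h3 := ha x
    have h4 : ‖f x‖ ^ 2 ≤ 1 := by nlinarith [hb x, norm_nonneg (f x)]
    rw [hx] at h1 h2
    linarith
  have hD : ∀ x ∈ Metric.closedBall (0 : E) 1, 0 < D x := by
    intro x hx
    have hx1 : ‖x‖ ≤ 1 := by simpa using hx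
    rcases eq_or_lt_of_le hx1 with h | h
    · have := hb1 x h
      simp only [D, h]; nlinarith
    · have h1 := ha x
      have h2 : 0 < 1 - ‖x‖ ^ 2 := by nlinarith [norm_nonneg x]
      simp only [D]; positivity
  have hdc : ContDiff ℝ 1 d := contDiff_id.sub hf
  have hac : ContDiff ℝ 1 a := hdc.norm_sq ℝ
  have hbc : ContDiff ℝ 1 b := contDiff_id.inner ℝ hdc
  have hDc : ContDiff ℝ 1 D :=
    (hbc.pow 2).add (hac.mul (contDiff_const.sub (contDiff_id.norm_sq ℝ)))
  refine no_retraction (fun x => x + τ x • d x) (fun x hx => ?_) (fun x hx => ?_) (fun x hx => ?_)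
  · have h1 : ContDiffAt ℝ 1 (fun x => √(D x)) x := hDc.contDiffAt.sqrt (hD x hx).ne'
    have h2 : ContDiffAt ℝ 1 τ x :=
      ((hbc.contDiffAt.neg).add h1).div hac.contDiffAt (ha x).ne'
    exact contDiffAt_id.add (h2.smul hdc.contDiffAt)
  · have h1 : ‖x + τ x • d x‖ ^ 2 = 1 := by
      rw [norm_add_sq_real, inner_smul_right, norm_smul, mul_pow, Real.norm_eq_abs, sq_abs]
      change ‖x‖ ^ 2 + 2 * (τ x * b x) + τ x ^ 2 * a x = 1
      have h2 : τ x * a x = -b x + √(D x) := div_mul_cancel₀ _ (ha x).ne'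
      have h3 : √(D x) ^ 2 = D x := Real.sq_sqrt (hD x hx).le
      have h4 : (τ x * a x + b x) ^ 2 = b x ^ 2 + a x * (1 - ‖x‖ ^ 2) := by
        rw [h2, neg_add_cancel_comm, h3]
      have h5 : a x * (‖x‖ ^ 2 + 2 * (τ x * b x) + τ x ^ 2 * a x - 1) = 0 := by linarith
      have := (mul_eq_zero.1 h5).resolve_left (ha x).ne'
      linarith
    exact (pow_eq_one_iff_of_nonneg (norm_nonneg _) two_ne_zero).1 h1
  · have h1 : D x = b x ^ 2 := by simp [D, hx]
    have h2 : τ x = 0 := by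
      simp only [τ, h1, Real.sqrt_sq (hb1 x hx).le, neg_add_cancel, zero_div]
    simp [h2]

/-- Brouwer's theorem for a continuous map of `E` into its closed unit ball. -/
theorem brouwer_unit (f : E → E) (hf : Continuous f) (hb : ∀ x, ‖f x‖ ≤ 1) :
    ∃ x, f x = x := by
  have happrox : ∀ η : ℝ, 0 < η → ∃ x ∈ Metric.closedBall (0 : E) 1, ‖f x - x‖ ≤ 2 * η := by
    intro η hη
    obtain ⟨g, hg, hgf, -⟩ := hf.exists_contDiff_approx 1 (ε := fun _ => η) continuous_const
      (fun _ => hη)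
    have hgf' : ∀ x, ‖g x - f x‖ ≤ η := fun x => by
      rw [← dist_eq_norm]; exact (hgf x).le
    have hg1 : ∀ x, ‖g x‖ ≤ 1 + η := fun x => by
      have := norm_add_le (f x) (g x - f x)
      rw [add_sub_cancel] at this
      linarith [hb x, hgf' x]
    have hb' : ∀ x, ‖(1 + η)⁻¹ • g x‖ ≤ 1 := fun x => by
      rw [norm_smul, norm_inv, Real.norm_of_nonneg (by positivity), inv_mul_le_one₀ (by positivity)]
      exact hg1 x
    obtain ⟨x, hx⟩ := brouwer_smooth (fun x => (1 + η)⁻¹ • g x) (contDiff_const.smul hg) hb'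
    have hx1 : ‖x‖ ≤ 1 := by rw [← hx]; exact hb' x
    have hgx : g x = (1 + η) • x := (inv_smul_eq_iff₀ (by positivity)).1 hx
    refine ⟨x, by simpa using hx1, ?_⟩
    have : f x - x = η • x - (g x - f x) := by rw [hgx]; module
    rw [this]
    refine (norm_sub_le _ _).trans ?_
    rw [norm_smul, Real.norm_of_nonneg hη.le]
    nlinarith [hgf' x]
  obtain ⟨x, hx, hmin⟩ := (isCompact_closedBall (0 : E) 1).exists_isMinOn
    ⟨0, by simp⟩ (f := fun x => ‖f x - x‖) (by fun_prop)
  refine ⟨x, ?_⟩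
  by_contra hne
  have hpos : 0 < ‖f x - x‖ := norm_pos_iff.2 (sub_ne_zero.2 hne)
  obtain ⟨y, hy, hyx⟩ := happrox (‖f x - x‖ / 4) (by positivity)
  have h1 : ‖f x - x‖ ≤ ‖f y - y‖ := hmin hy
  linarith

/-- Brouwer's theorem in the form used below: a continuous bounded self-map of `E` has a fixed
point. -/
theorem brouwer_bounded (f : E → E) (hf : Continuous f) (R : ℝ) (hR : 0 < R)
    (hb : ∀ x, ‖f x‖ ≤ R) : ∃ x, f x = x := by
  obtain ⟨x, hx⟩ := brouwer_unit (fun x => R⁻¹ • f (R • x)) (by fun_prop) (fun x => by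
    rw [norm_smul, norm_inv, Real.norm_of_nonneg hR.le, inv_mul_le_one₀ hR]
    exact hb _)
  exact ⟨R • x, (inv_smul_eq_iff₀ hR.ne').1 hx⟩

end Brouwer

/-! ### Equilibria of continuous games -/

section Equilibrium
variable {n : ℕ}

/-- A continuous retraction of all matrices onto the mixed profiles: take positive parts, then scale
down the rows whose sum exceeds `1`. -/
noncomputable def retr (z : Fin n → Fin n → ℝ) : Fin n → Fin n → ℝ := fun i j =>
  max (z i j) 0 / max 1 (∑ k, max (z i k) 0)

theorem isMixed_retr (z : Fin n → Fin n → ℝ) : IsMixed (retr z) := by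
  intro i
  have h1 : (0 : ℝ) < max 1 (∑ k, max (z i k) 0) := lt_max_of_lt_left one_pos
  refine ⟨fun j => div_nonneg (le_max_right _ _) h1.le, ?_⟩
  simp only [retr]
  rw [← Finset.sum_div, div_le_one h1]
  exact le_max_right _ _

theorem retr_of_isMixed {z : Fin n → Fin n → ℝ} (hz : IsMixed z) : retr z = z := by
  funext i j
  have h1 : ∀ k, max (z i k) 0 = z i k := fun k => max_eq_left ((hz i).1 k)
  simp only [retr, h1]
  rw [max_eq_left (hz i).2, div_one]

theorem continuous_retr : Continuous (retr : (Fin n → Fin n → ℝ) → _) := by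
  refine continuous_pi fun i => continuous_pi fun j => ?_
  refine Continuous.div (by fun_prop) (by fun_prop) fun z => ?_
  exact (lt_max_of_lt_left one_pos).ne'

/-- Brouwer's theorem on the set of mixed profiles. -/
theorem exists_isMixed_fixedPoint (N : (Fin n → Fin n → ℝ) → Fin n → Fin n → ℝ)
    (hN : ContinuousOn N {z | IsMixed z}) (hmaps : ∀ z, IsMixed z → IsMixed (N z)) :
    ∃ z, IsMixed z ∧ N z = z := by
  let c : EuclideanSpace ℝ (Fin n × Fin n) → Fin n → Fin n → ℝ := fun x i j => x (i, j)
  let f : EuclideanSpace ℝ (Fin n × Fin n) → EuclideanSpace ℝ (Fin n × Fin n) := fun x => WithLp.toLp 2 fun p => N (retr (c x)) p.1 p.2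
  have hNc : Continuous fun x : EuclideanSpace ℝ (Fin n × Fin n) => N (retr (c x)) :=
    hN.comp_continuous (continuous_retr.comp (by fun_prop)) fun x => isMixed_retr _
  have hf : Continuous f := by
    refine (PiLp.continuous_toLp 2 _).comp (continuous_pi fun p => ?_)
    exact (continuous_apply p.2).comp ((continuous_apply p.1).comp hNc)
  obtain ⟨x, hx⟩ := brouwer_bounded f hf (√(Fintype.card (Fin n × Fin n)) + 1) (by positivity) (by
    intro x
    have hm := hmaps _ (isMixed_retr (c x))
    have : ‖f x‖ ≤ √(Fintype.card (Fin n × Fin n)) := by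
      rw [EuclideanSpace.norm_eq]
      apply Real.sqrt_le_sqrt
      calc ∑ p, ‖f x p‖ ^ 2 ≤ ∑ _p : Fin n × Fin n, (1 : ℝ) := by
            refine Finset.sum_le_sum fun p _ => ?_
            have h0 : 0 ≤ f x p := (hm p.1).1 p.2
            have h1 : f x p ≤ 1 := (Finset.single_le_sum (fun j _ => (hm p.1).1 j)
              (Finset.mem_univ p.2)).trans (hm p.1).2
            rw [Real.norm_of_nonneg h0]
            nlinarith
        _ = _ := by simp
    linarith)
  have hcx : N (retr (c x)) = c x := by
    funext i j
    exact congrArg (fun y : EuclideanSpace ℝ (Fin n × Fin n) => y (i, j)) hx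
  have hm : IsMixed (c x) := hcx ▸ hmaps _ (isMixed_retr (c x))
  exact ⟨c x, hm, by rwa [retr_of_isMixed hm] at hcx⟩

/-- Nash's argument in abstract form: if `D z i j` is the payoff of action `j` to player `i`,
depending continuously on `z`, then in some mixed profile `z` no action of any player pays more than
her average payoff. -/
theorem exists_equilibrium (D : (Fin n → Fin n → ℝ) → Fin n → Fin n → ℝ) (hD : Continuous D) :
    ∃ z, IsMixed z ∧ ∀ i j, D z i j ≤ ∑ k, z i k * D z i k := by
  -- the gain of `i` from switching to `j`, truncated at `0`
  let φ : (Fin n → Fin n → ℝ) → Fin n → Fin n → ℝ := fun z i j =>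
    max (D z i j - ∑ k, z i k * D z i k) 0
  have hφ0 : ∀ z i j, 0 ≤ φ z i j := fun z i j => le_max_right _ _
  have hDc : ∀ i j, Continuous fun z => D z i j := fun i j =>
    (continuous_apply j).comp ((continuous_apply i).comp hD)
  have hφc : ∀ i j, Continuous fun z => φ z i j := fun i j => by
    refine ((hDc i j).sub (continuous_finsetSum _ fun k _ => ?_)).max continuous_const
    exact Continuous.mul (by fun_prop) (hDc i k)
  have hden : ∀ z i, 0 < 1 + ∑ k, φ z i k := fun z i => by
    have := Finset.sum_nonneg fun k (_ : k ∈ Finset.univ) => hφ0 z i k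
    linarith
  obtain ⟨z, hz, hfix⟩ := exists_isMixed_fixedPoint
    (fun z i j => (z i j + φ z i j) / (1 + ∑ k, φ z i k))
    (by
      refine Continuous.continuousOn (continuous_pi fun i => continuous_pi fun j => ?_)
      refine Continuous.div (Continuous.add (by fun_prop) (hφc i j))
        (continuous_const.add (continuous_finsetSum _ fun k _ => hφc i k)) fun z => (hden z i).ne')
    (by
      intro z hz i
      refine ⟨fun j => div_nonneg (add_nonneg ((hz i).1 j) (hφ0 z i j)) (hden z i).le, ?_⟩
      rw [← Finset.sum_div, div_le_one (hden z i), Finset.sum_add_distrib]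
      linarith [(hz i).2])
  refine ⟨z, hz, fun i => ?_⟩
  set M := ∑ k, z i k * D z i k with hM
  set Φ := ∑ k, φ z i k with hΦ
  have hφz : ∀ j, φ z i j = z i j * Φ := by
    intro j
    have := congrFun (congrFun hfix i) j
    rw [div_eq_iff (hden z i).ne'] at this
    linarith
  -- if `i` had a gain, she would use exactly the actions paying more than her average
  have hΦ0 : Φ = 0 := by
    by_contra hne
    have hpos : 0 < Φ := lt_of_le_of_ne (Finset.sum_nonneg fun k _ => hφ0 z i k) (Ne.symm hne)
    have hsum : ∑ j, z i j = 1 := by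
      have : (∑ j, z i j) * Φ = 1 * Φ := by
        rw [Finset.sum_mul, one_mul, hΦ]
        exact Finset.sum_congr rfl fun j _ => (hφz j).symm
      exact mul_right_cancel₀ hne this
    have hlt : ∀ j, 0 < z i j → M < D z i j := by
      intro j hj
      have h1 : 0 < φ z i j := by rw [hφz j]; positivity
      rcases lt_max_iff.1 h1 with h | h
      · linarith
      · exact absurd h (lt_irrefl 0)
    obtain ⟨j, -, hj⟩ : ∃ j ∈ Finset.univ, 0 < z i j := by
      by_contra! hcon
      have := Finset.sum_nonpos hcon
      linarith
    have : ∑ k, z i k * M < ∑ k, z i k * D z i k := by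
      refine Finset.sum_lt_sum (fun k _ => ?_) ⟨j, Finset.mem_univ j, ?_⟩
      · rcases eq_or_lt_of_le ((hz i).1 k) with h | h
        · simp [← h]
        · exact mul_le_mul_of_nonneg_left (hlt k h).le h.le
      · exact mul_lt_mul_of_pos_left (hlt j hj) hj
    rw [← Finset.sum_mul, hsum, one_mul] at this
    exact lt_irrefl _ this
  intro j
  have h1 : φ z i j = 0 := by rw [hφz j, hΦ0, mul_zero]
  have h2 : D z i j - M ≤ φ z i j := le_max_left _ _
  linarith

end Equilibrium

/-! ### Expected utilities in the delegation game -/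

section Game
variable {n : ℕ}

/-- Expectation of `F` over the random pure profile produced by `x`. -/
def expectedVal (x : Fin n → Fin n → ℝ) (F : (Fin n → Option (Fin n)) → ℝ) : ℝ :=
  ∑ s : Fin n → Option (Fin n), prob x s * F s

theorem prob_nonneg {x : Fin n → Fin n → ℝ} (hx : IsMixed x) (s : Fin n → Option (Fin n)) :
    0 ≤ prob x s := by
  refine Finset.prod_nonneg fun i _ => ?_
  cases s i with
  | none => simpa using (hx i).2
  | some j => exact (hx i).1 j

theorem sum_prob (x : Fin n → Fin n → ℝ) : ∑ s, prob x s = 1 := by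
  have := Finset.prod_univ_sum (fun _ : Fin n => (Finset.univ : Finset (Option (Fin n))))
    (fun i o => o.elim (1 - ∑ j, x i j) (x i))
  rw [Fintype.piFinset_univ] at this
  simp only [prob]
  rw [← this]
  exact Finset.prod_eq_one fun i _ => by simp [Fintype.sum_option]

theorem expectedVal_nonneg {x : Fin n → Fin n → ℝ} (hx : IsMixed x)
    {F : (Fin n → Option (Fin n)) → ℝ} (hF : ∀ s, 0 ≤ F s) : 0 ≤ expectedVal x F :=
  Finset.sum_nonneg fun s _ => mul_nonneg (prob_nonneg hx s) (hF s)

theorem prob_update (x : Fin n → Fin n → ℝ) (i : Fin n) (y : Fin n → ℝ)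
    (s : Fin n → Option (Fin n)) :
    prob (Function.update x i y) s = (s i).elim (1 - ∑ j, y j) y *
      ∏ k ∈ Finset.univ.erase i, (s k).elim (1 - ∑ j, x k j) (x k) := by
  rw [prob, ← Finset.mul_prod_erase _ _ (Finset.mem_univ i), Function.update_self]
  congr 1
  refine Finset.prod_congr rfl fun k hk => ?_
  rw [Function.update_of_ne (Finset.ne_of_mem_erase hk)]

/-- Expectations are affine in the strategy of each single agent. -/
theorem expectedVal_update (x : Fin n → Fin n → ℝ) (i : Fin n) (y : Fin n → ℝ)
    (F : (Fin n → Option (Fin n)) → ℝ) :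
    expectedVal (Function.update x i y) F =
      ∑ j, y j * expectedVal (Function.update x i (Pi.single j 1)) F +
        (1 - ∑ j, y j) * expectedVal (Function.update x i 0) F := by
  simp only [expectedVal, Finset.mul_sum]
  rw [Finset.sum_comm, ← Finset.sum_add_distrib]
  refine Finset.sum_congr rfl fun s _ => ?_
  simp only [prob_update]
  set Q := ∏ k ∈ Finset.univ.erase i, (s k).elim (1 - ∑ j, x k j) (x k)
  have h : (s i).elim (1 - ∑ j, y j) y =
      ∑ j, y j * (s i).elim (1 - ∑ k, (Pi.single j 1 : Fin n → ℝ) k) (Pi.single j 1) +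
        (1 - ∑ j, y j) * (s i).elim (1 - ∑ k, (0 : Fin n → ℝ) k) 0 := by
    cases s i with
    | none => simp
    | some m => simp [Pi.single_apply]
  rw [h, add_mul, add_mul, Finset.sum_mul, Finset.sum_mul]
  congr 1
  · exact Finset.sum_congr rfl fun j _ => by ring
  · ring

theorem isStrat_single (j : Fin n) : IsStrat (Pi.single j 1 : Fin n → ℝ) :=
  ⟨fun k => by by_cases h : k = j <;> simp [h], by simp⟩

theorem isStrat_zero : IsStrat (0 : Fin n → ℝ) := ⟨fun _ => le_rfl, by simp⟩

theorem IsMixed.update {x : Fin n → Fin n → ℝ} (hx : IsMixed x) (i : Fin n) {y : Fin n → ℝ}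
    (hy : IsStrat y) : IsMixed (Function.update x i y) := by
  intro k
  by_cases h : k = i
  · subst h; simpa using hy
  · simpa [h] using hx k

theorem expectedVal_ge_mul {x : Fin n → Fin n → ℝ} (hx : IsMixed x) (j : Fin n)
    {F : (Fin n → Option (Fin n)) → ℝ} (hF : ∀ s, 0 ≤ F s) :
    x j j * expectedVal (Function.update x j (Pi.single j 1)) F ≤ expectedVal x F := by
  conv_rhs => rw [← Function.update_eq_self j x]
  rw [expectedVal_update x j (x j)]
  have h1 := Finset.single_le_sum (f := fun k => x j k *
    expectedVal (Function.update x j (Pi.single k 1)) F) (fun k _ => mul_nonneg ((hx j).1 k)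
      (expectedVal_nonneg (hx.update j (isStrat_single k)) hF)) (Finset.mem_univ j)
  have h2 := mul_nonneg (sub_nonneg.2 (hx j).2) (expectedVal_nonneg (hx.update j isStrat_zero) hF)
  linarith

theorem expectedVal_eq_of_support (x : Fin n → Fin n → ℝ) {F : (Fin n → Option (Fin n)) → ℝ} {c : ℝ}
    (h : ∀ s, prob x s ≠ 0 → F s = c) : expectedVal x F = c := by
  have : expectedVal x F = ∑ s, prob x s * c := by
    refine Finset.sum_congr rfl fun s _ => ?_
    by_cases hs : prob x s = 0
    · simp [hs]
    · rw [h s hs]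
  rw [this, ← Finset.sum_mul, sum_prob, one_mul]

theorem eq_of_prob_ne_zero {x : Fin n → Fin n → ℝ} {s : Fin n → Option (Fin n)}
    (hs : prob x s ≠ 0) {i j : Fin n} (hi : x i = Pi.single j 1) : s i = some j := by
  have h := Finset.prod_ne_zero_iff.1 hs i (Finset.mem_univ i)
  rw [hi] at h
  cases hsi : s i with
  | none => simp [hsi] at h
  | some m =>
    by_cases hm : m = j
    · rw [hm]
    · simp [hsi, Pi.single_apply, hm] at h

theorem eq_none_of_prob_ne_zero {x : Fin n → Fin n → ℝ} {s : Fin n → Option (Fin n)}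
    (hs : prob x s ≠ 0) {i : Fin n} (hi : x i = 0) : s i = none := by
  have h := Finset.prod_ne_zero_iff.1 hs i (Finset.mem_univ i)
  rw [hi] at h
  cases hsi : s i with
  | none => rfl
  | some m => simp [hsi] at h

theorem guru_of_delegate {s : Fin n → Option (Fin n)} {i j : Fin n} (hi : s i = some j)
    (hj : s j = some j) : guru s i = some j := by
  obtain ⟨m, rfl⟩ : ∃ m, n = m + 1 := ⟨n - 1, by have := i.2; omega⟩
  have : (fun o => Option.bind o s)^[m + 1] (some i) = some j := by
    rw [Function.iterate_succ_apply]
    simp only [Option.bind_some, hi]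
    exact Function.iterate_fixed (by simp [hj]) m
  simp [guru, this, hj]

theorem guru_of_abstain {s : Fin n → Option (Fin n)} {i : Fin n} (hi : s i = none) :
    guru s i = none := by
  obtain ⟨m, rfl⟩ : ∃ m, n = m + 1 := ⟨n - 1, by have := i.2; omega⟩
  have : (fun o => Option.bind o s)^[m + 1] (some i) = none := by
    rw [Function.iterate_succ_apply]
    simp only [Option.bind_some, hi]
    exact Function.iterate_fixed (by simp) m
  simp [guru, this]

theorem votes_of_guru {s : Fin n → Option (Fin n)} {i j : Fin n} (h : guru s i = some j) :
    s j = some j := by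
  obtain ⟨k, -, hk⟩ := Option.bind_eq_some_iff.1 h
  by_cases hv : s k = some k
  · rw [if_pos hv] at hk
    exact (Option.some.inj hk) ▸ hv
  · simp [hv] at hk

theorem pureUtil_nonneg {u : Fin n → Fin n → ℝ} (hu : ∀ i j, 0 ≤ u i j)
    (s : Fin n → Option (Fin n)) (i : Fin n) : 0 ≤ pureUtil u s i := by
  rw [pureUtil]
  cases guru s i with
  | none => exact le_rfl
  | some j => exact hu i j

/-- Expected utility of `i` when she delegates to `j` with certainty (votes, if `j = i`) while the
others play `x`. -/
def payoff (u x : Fin n → Fin n → ℝ) (i j : Fin n) : ℝ :=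
  util u (Function.update x i (Pi.single j 1)) i

/-- Abstention yields utility `0`, so only delegating and voting contribute. -/
theorem util_update (u x : Fin n → Fin n → ℝ) (i : Fin n) (y : Fin n → ℝ) :
    util u (Function.update x i y) i = ∑ j, y j * payoff u x i j := by
  have h0 : expectedVal (Function.update x i 0) (fun s => pureUtil u s i) = 0 := by
    refine expectedVal_eq_of_support _ fun s hs => ?_
    rw [pureUtil, guru_of_abstain (eq_none_of_prob_ne_zero hs (Function.update_self ..))]
    rfl
  have h := expectedVal_update x i y (fun s => pureUtil u s i)
  rw [h0, mul_zero, add_zero] at h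
  exact h

theorem util_eq (u x : Fin n → Fin n → ℝ) (i : Fin n) :
    util u x i = ∑ j, x i j * payoff u x i j := by
  conv_lhs => rw [← Function.update_eq_self i x]
  exact util_update u x i (x i)

theorem payoff_nonneg {u x : Fin n → Fin n → ℝ} (hu : ∀ i j, 0 ≤ u i j) (hx : IsMixed x)
    (i j : Fin n) : 0 ≤ payoff u x i j :=
  expectedVal_nonneg (hx.update i (isStrat_single j)) fun s => pureUtil_nonneg hu s i

theorem payoff_self (u x : Fin n → Fin n → ℝ) (i : Fin n) : payoff u x i i = u i i := by
  refine expectedVal_eq_of_support _ fun s hs => ?_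
  have hi : s i = some i := eq_of_prob_ne_zero hs (Function.update_self ..)
  rw [pureUtil, guru_of_delegate hi hi]
  rfl

/-- If `i` delegates to `j`, then `j` becomes her guru at least when `j` votes. -/
theorem payoff_ge {u x : Fin n → Fin n → ℝ} (hu : ∀ i j, 0 ≤ u i j) (hx : IsMixed x)
    {i j : Fin n} (hij : i ≠ j) : x j j * u i j ≤ payoff u x i j := by
  have h := expectedVal_ge_mul (hx.update i (isStrat_single j)) j
    (fun s => pureUtil_nonneg hu s i)
  rw [Function.update_of_ne hij.symm] at h
  rwa [expectedVal_eq_of_support (c := u i j)] at h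
  intro s hs
  have hj : s j = some j := eq_of_prob_ne_zero hs (Function.update_self ..)
  have hi : s i = some j := eq_of_prob_ne_zero hs (by
    rw [Function.update_of_ne hij, Function.update_self])
  rw [pureUtil, guru_of_delegate hi hj]
  rfl

theorem continuous_payoff (u : Fin n → Fin n → ℝ) : Continuous (payoff u) := by
  refine continuous_pi fun i => continuous_pi fun j => ?_
  refine continuous_finsetSum _ fun s _ => Continuous.mul ?_ continuous_const
  simp only [prob_update]
  refine continuous_const.mul (continuous_finsetProd _ fun k _ => ?_)
  cases s k with
  | none => simp only [Option.elim]; fun_prop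
  | some m => simp only [Option.elim]; fun_prop

/-- Some pure profile does at least as well as the mixed profile `x` averaging over all of them. -/
theorem exists_pure_ge (u : Fin n → Fin n → ℝ) {x : Fin n → Fin n → ℝ} (hx : IsMixed x) :
    ∃ s, SW u x ≤ ∑ i, pureUtil u s i := by
  have hSW : SW u x = ∑ s, prob x s * ∑ i, pureUtil u s i := by
    simp only [SW, util, Finset.mul_sum]
    exact Finset.sum_comm
  by_contra! hcon
  have h1 : ∀ s, prob x s * ∑ i, pureUtil u s i ≤ prob x s * SW u x := fun s =>
    mul_le_mul_of_nonneg_left (hcon s).le (prob_nonneg hx s)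
  obtain ⟨s, -, hs⟩ : ∃ s ∈ Finset.univ, 0 < prob x s := by
    by_contra! h
    have := Finset.sum_nonpos h
    rw [sum_prob] at this
    linarith
  have h2 : ∑ s, prob x s * ∑ i, pureUtil u s i < ∑ s, prob x s * SW u x :=
    Finset.sum_lt_sum (fun s _ => h1 s)
      ⟨s, Finset.mem_univ s, mul_lt_mul_of_pos_left (hcon s) hs⟩
  rw [← hSW, ← Finset.sum_mul, sum_prob, one_mul] at h2
  exact lt_irrefl _ h2

end Game

/-- Main theorem: for every ε ∈ [0,1] and every liquid democracy game there exists
an ε-Nash equilibrium x with SW(x) ≥ ε · OPT. -/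
theorem stmt9 {n : ℕ} (ε : ℝ) (hε : ε ∈ Set.Icc (0:ℝ) 1)
    (u : Fin n → Fin n → ℝ) (hu : ∀ i j, 0 ≤ u i j ∧ u i j ≤ 1)
    (OPT : ℝ) (hOPT : IsGreatest (SWvals u) OPT) :
    ∃ x : Fin n → Fin n → ℝ, IsMixed x ∧ EpsNash u ε x ∧ SW u x ≥ ε * OPT := by
  obtain ⟨hε0, hε1⟩ := hε
  have hu0 : ∀ i j, 0 ≤ u i j := fun i j => (hu i j).1
  obtain ⟨⟨x₀, hx₀, rfl⟩, -⟩ := hOPT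
  obtain ⟨s, hs⟩ := exists_pure_ge u hx₀
  -- `c i` is the probability with which `i` is forced to vote: `ε` for the gurus of `s`
  let c : Fin n → ℝ := fun i => if s i = some i then ε else 0
  have hc : ∀ i, 0 ≤ c i ∧ c i ≤ ε := fun i => by
    by_cases h : s i = some i <;> simp [c, h, hε0]
  let X : (Fin n → Fin n → ℝ) → Fin n → Fin n → ℝ := fun z i j =>
    c i * (Pi.single i 1 : Fin n → ℝ) j + (1 - c i) * z i j
  have hXc : Continuous X := by fun_prop
  obtain ⟨z, hz, heq⟩ := exists_equilibrium (fun z => payoff u (X z))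
    ((continuous_payoff u).comp hXc)
  have hx : IsMixed (X z) := by
    intro i
    have h1 : 0 ≤ 1 - c i := by linarith [(hc i).2]
    refine ⟨fun j => add_nonneg (mul_nonneg (hc i).1 ((isStrat_single i).1 j))
      (mul_nonneg h1 ((hz i).1 j)), ?_⟩
    simp only [X]
    rw [Finset.sum_add_distrib, ← Finset.mul_sum, ← Finset.mul_sum]
    nlinarith [(hz i).2, (isStrat_single i).2, (hc i).1]
  set x := X z with hxdef
  -- `M i` is the best response value of `i` against `x`
  let M : Fin n → ℝ := fun i => ∑ k, z i k * payoff u x i k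
  have hMge : ∀ i j, payoff u x i j ≤ M i := heq
  have hM0 : ∀ i, 0 ≤ M i := fun i => Finset.sum_nonneg fun k _ =>
    mul_nonneg ((hz i).1 k) (payoff_nonneg hu0 hx i k)
  have hutil : ∀ i, util u x i = c i * u i i + (1 - c i) * M i := by
    intro i
    rw [util_eq]
    have : ∀ j, x i j * payoff u x i j = c i * ((Pi.single i 1 : Fin n → ℝ) j * payoff u x i j)
        + (1 - c i) * (z i j * payoff u x i j) := fun j => by
      rw [hxdef]; ring
    simp only [this]
    rw [Finset.sum_add_distrib, ← Finset.mul_sum, ← Finset.mul_sum]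
    simp [Pi.single_apply, payoff_self, M]
  have hself : ∀ i, u i i ≤ util u x i := by
    intro i
    rw [hutil]
    have := hMge i i
    rw [payoff_self] at this
    nlinarith [(hc i).2]
  refine ⟨x, hx, fun i y hy => ?_, ?_⟩
  · rw [util_update, hutil]
    have h1 : ∑ j, y j * payoff u x i j ≤ M i := by
      calc ∑ j, y j * payoff u x i j ≤ ∑ j, y j * M i :=
            Finset.sum_le_sum fun j _ => mul_le_mul_of_nonneg_left (hMge i j) (hy.1 j)
        _ = (∑ j, y j) * M i := by rw [Finset.sum_mul]
        _ ≤ M i := mul_le_of_le_one_left (hM0 i) hy.2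
    have h2 := mul_le_mul_of_nonneg_left h1 (sub_nonneg.2 hε1)
    have h3 := mul_nonneg (hc i).1 (hu0 i i)
    nlinarith [hM0 i, (hc i).2]
  · refine (mul_le_mul_of_nonneg_left hs hε0).trans ?_
    rw [Finset.mul_sum]
    refine Finset.sum_le_sum fun i _ => ?_
    cases hg : guru s i with
    | none =>
      simp only [pureUtil, hg, Option.elim, mul_zero]
      exact (hu0 i i).trans (hself i)
    | some j =>
      simp only [pureUtil, hg, Option.elim]
      have hj := votes_of_guru hg
      by_cases hi : s i = some i
      · have : i = j := by
          rw [guru_of_delegate hi hi] at hg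
          exact Option.some.inj hg
        subst this
        nlinarith [hself i, hu0 i i]
      · have hij : i ≠ j := fun h => hi (h ▸ hj)
        have hci : c i = 0 := by simp [c, hi]
        have hxj : ε ≤ x j j := by
          have h1 : 0 ≤ (1 - c j) * z j j := mul_nonneg (by linarith [(hc j).2]) ((hz j).1 j)
          have h2 : x j j = c j + (1 - c j) * z j j := by simp [hxdef, X]
          have h3 : c j = ε := by simp [c, hj]
          linarith
        calc ε * u i j ≤ x j j * u i j := mul_le_mul_of_nonneg_right hxj (hu0 i j)
          _ ≤ payoff u x i j := payoff_ge hu0 hx hij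
          _ ≤ M i := hMge i j
          _ = util u x i := by rw [hutil, hci]; ring
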